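/- There is a universal constant C > 0 such that every finite simple graph G on n ≥ 2 vertices admits a partition of its vertex set into nonempty clusters V_1, …, V_k with the following two properties: (i) each cluster has strong diameter at most C·log n, i.e., for each i the induced subgraph G[V_i] is connected and dist_{G[V_i]}(u,v) ≤ C·log n for all u, v ∈ V_i; and (ii) for every vertex v, the neighbors of v meet at most C·log n distinct clusters (i.e., |{ i : V_i contains a neighbor of v }| ≤ C·log n). -/

import Mathlib

/-!
Every vertex `u` starts a breadth-first wave after a delay `δ u < L`, and each vertex joins the
cluster of the wave that reaches it first, ties being broken by a fixed linear order. All vertices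
on a shortest path from a center to a member of its cluster are in that cluster, which therefore
has radius less than `L`. If `v` is first reached at time `T`, then the centers of the clusters of
its neighbors have waves reaching `v` no later than time `T + 2`.

For the delays to make every vertex be reached by few waves in this window, weight the delay `j`
by `2 ^ j`. For a single wave, a factor `8 / 7` for arriving in `[T, T + 2]` is then exactly paid
for by the exclusion of arrivals before `T`. Hence the weighted average of `(8 / 7) ^ N`, where
`N` counts the waves in the window and only delays without arrivals before `T` contribute, is at
most about `1`. A union bound over all vertices and all times `T < L` then gives `N ≤ 12 * L` for
some choice of the delays.
-/

open Finset

section Delays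

/-- The factor is chosen so that the gain on the window `[m, m + s]` is exactly `2 ^ m`, the amount
by which the sum over `[m, L)` of the powers of two falls short of `2 ^ L`. -/
lemma sum_Ico_two_pow_mul_window_le (m L s : ℕ) :
    ∑ j ∈ Ico m L, (2 : ℝ) ^ j * (if j ≤ m + s then 2 ^ (s + 1) / (2 ^ (s + 1) - 1) else 1) ≤
      2 ^ L := by
  obtain hLm | hmL := le_total L m
  · simp [Ico_eq_empty_of_le hLm]
  set c : ℝ := 2 ^ (s + 1) - 1 with hc
  have hc_pos : 0 < c := sub_pos.2 (one_lt_pow₀ one_lt_two s.succ_ne_zero)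
  have hfactor : (2 : ℝ) ^ (s + 1) / c = 1 + 1 / c := by field_simp; simp [hc]
  have hsum {a b : ℕ} (hab : a ≤ b) : ∑ j ∈ Ico a b, (2 : ℝ) ^ j = 2 ^ b - 2 ^ a := by
    rw [geom_sum_Ico (by norm_num) hab]; norm_num
  have hwindow : ∑ j ∈ Ico m L with j ≤ m + s, (2 : ℝ) ^ j ≤ 2 ^ m * c := by
    calc ∑ j ∈ Ico m L with j ≤ m + s, (2 : ℝ) ^ j
        ≤ ∑ j ∈ Ico m (m + s + 1), (2 : ℝ) ^ j :=
          sum_le_sum_of_subset_of_nonneg (by grind) fun _ _ _ => by positivity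
      _ = 2 ^ m * c := by rw [hsum (by lia), hc]; ring
  calc ∑ j ∈ Ico m L, (2 : ℝ) ^ j * (if j ≤ m + s then 2 ^ (s + 1) / c else 1)
      = ∑ j ∈ Ico m L, (2 : ℝ) ^ j + 1 / c * ∑ j ∈ Ico m L with j ≤ m + s, (2 : ℝ) ^ j := by
        rw [sum_filter, mul_sum, ← sum_add_distrib]
        refine sum_congr rfl fun j _ => ?_
        split_ifs
        · rw [hfactor]; ring
        · ring
    _ ≤ (2 ^ L - 2 ^ m) + 1 / c * (2 ^ m * c) := by rw [hsum hmL]; gcongr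
    _ = 2 ^ L := by field_simp; ring

/-- The factor by which the averaging argument multiplies the weight of a wave arriving at time `t`:
early arrivals are excluded, and those in the window `[T, T + s]` are rewarded. -/
noncomputable def windowWeight (T s : ℕ) (t : ℕ∞) : ℝ :=
  if t < T then 0 else if t ≤ T + s then 2 ^ (s + 1) / (2 ^ (s + 1) - 1) else 1

lemma one_le_two_pow_div_two_pow_sub_one (s : ℕ) :
    (1 : ℝ) ≤ 2 ^ (s + 1) / (2 ^ (s + 1) - 1) :=
  (one_le_div (sub_pos.2 (one_lt_pow₀ one_lt_two s.succ_ne_zero))).2 (sub_le_self _ zero_le_one)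

lemma windowWeight_nonneg (T s : ℕ) (t : ℕ∞) : 0 ≤ windowWeight T s t := by
  have := one_le_two_pow_div_two_pow_sub_one s
  unfold windowWeight
  split_ifs <;> linarith

lemma sum_range_two_pow_mul_windowWeight_le (d : ℕ∞) (T L s : ℕ) :
    ∑ j ∈ range L, (2 : ℝ) ^ j * windowWeight T s (j + d) ≤ 2 ^ L := by
  obtain ⟨m, hm⟩ : ∃ m : ℕ, (m : ℕ∞) = T - d :=
    ⟨_, ENat.natCast_toNat (ne_top_of_le_ne_top (ENat.natCast_ne_top T) tsub_le_self)⟩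
  have hearly (j : ℕ) : j + d < (T : ℕ∞) ↔ j < m := by
    rw [← lt_tsub_iff_right, ← hm, Nat.cast_lt]
  have hwindow (j : ℕ) (hj : j + d ≤ (T : ℕ∞) + s) : j ≤ m + s := by
    cases d with
    | top => exact absurd hj (by simp [← Nat.cast_add])
    | coe d => norm_cast at hj hm; lia
  calc ∑ j ∈ range L, (2 : ℝ) ^ j * windowWeight T s (j + d)
      = ∑ j ∈ Ico m L, (2 : ℝ) ^ j * windowWeight T s (j + d) := by
        refine (sum_subset (fun j hj => mem_range.2 (mem_Ico.1 hj).2) fun j hjL hj => ?_).symm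
        rw [windowWeight, if_pos ((hearly j).2 (by simp_all)), mul_zero]
    _ ≤ ∑ j ∈ Ico m L,
          (2 : ℝ) ^ j * (if j ≤ m + s then 2 ^ (s + 1) / (2 ^ (s + 1) - 1) else 1) := by
        refine sum_le_sum fun j hj => mul_le_mul_of_nonneg_left ?_ (by positivity)
        rw [windowWeight, if_neg ((hearly j).not.2 (mem_Ico.1 hj).1.not_gt)]
        split_ifs with harr hj hj
        exacts [le_rfl, absurd (hwindow j harr) hj, one_le_two_pow_div_two_pow_sub_one s, le_rfl]
    _ ≤ 2 ^ L := sum_Ico_two_pow_mul_window_le m L s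

variable {ι κ : Type*} [Fintype ι] [Fintype κ]

lemma half_two_pow_pow_card_le_sum_prod [DecidableEq ι] {L : ℕ}
    (hι : 2 * Fintype.card ι ≤ 2 ^ L) :
    (2 ^ L) ^ Fintype.card ι / 2 ≤
      ∑ δ ∈ Fintype.piFinset fun _ : ι => range L, ∏ u, (2 : ℝ) ^ δ u := by
  set n := Fintype.card ι
  have hpow : (0 : ℝ) < 2 ^ L := by positivity
  have hn : (n : ℝ) / 2 ^ L ≤ 1 / 2 := by
    rw [div_le_div_iff₀ hpow two_pos, mul_comm, one_mul]; exact_mod_cast hι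
  have hinv : (2 ^ L : ℝ)⁻¹ ≤ 1 := inv_le_one_of_one_le₀ (one_le_pow₀ one_le_two)
  have bernoulli := one_add_mul_le_pow (a := -(2 ^ L : ℝ)⁻¹) (by linarith) n
  calc ((2 : ℝ) ^ L) ^ n / 2 = (2 ^ L) ^ n * (1 / 2) := by ring
    _ ≤ (2 ^ L) ^ n * (1 + -(2 ^ L : ℝ)⁻¹) ^ n := by
      gcongr; refine le_trans ?_ bernoulli; rw [mul_neg, ← div_eq_mul_inv]; linarith
    _ = (2 ^ L - 1) ^ n := by rw [← mul_pow]; congr 1; field_simp; ring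
    _ = _ := by
      rw [← prod_univ_sum (fun _ : ι => range L) (fun _ j => (2 : ℝ) ^ j), prod_const,
        geom_sum_eq (by norm_num)]
      norm_num [n]

lemma prod_windowWeight_of_forall_le {T : ℕ} {t : ι → ℕ∞} (h : ∀ u, T ≤ t u) (s : ℕ) :
    ∏ u, windowWeight T s (t u) = (2 ^ (s + 1) / (2 ^ (s + 1) - 1)) ^ #{u | t u ≤ T + s} := by
  simp only [windowWeight, (h _).not_gt, if_false]
  rw [← prod_filter, prod_const]

lemma sum_prod_two_pow_mul_windowWeight_le [DecidableEq ι] (d : ι → ℕ∞) (T L s : ℕ) :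
    ∑ δ ∈ Fintype.piFinset fun _ : ι => range L,
      ∏ u, (2 : ℝ) ^ δ u * windowWeight T s (δ u + d u) ≤ (2 ^ L) ^ Fintype.card ι := by
  rw [sum_prod_piFinset (range L) fun u j => (2 : ℝ) ^ j * windowWeight T s (j + d u)]
  calc ∏ u, ∑ j ∈ range L, (2 : ℝ) ^ j * windowWeight T s (j + d u)
      ≤ ∏ _u : ι, 2 ^ L := by
        refine prod_le_prod (fun u _ => sum_nonneg fun j _ => ?_) fun u _ =>
          sum_range_two_pow_mul_windowWeight_le (d u) T L s
        exact mul_nonneg (by positivity) (windowWeight_nonneg _ _ _)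
    _ = (2 ^ L) ^ Fintype.card ι := by simp

lemma exists_forall_lt_of_card_nsmul_lt_sum {α β M : Type*} [AddCommMonoid M] [LinearOrder M]
    [IsOrderedCancelAddMonoid M] {s : Finset α} {t : Finset β} {f : α → β → M} {g : α → M} {B : M}
    (hf : ∀ a ∈ s, ∀ b ∈ t, 0 ≤ f a b)
    (hB : ∀ b ∈ t, ∑ a ∈ s, f a b ≤ B) (hg : #t • B < ∑ a ∈ s, g a) :
    ∃ a ∈ s, ∀ b ∈ t, f a b < g a := by
  have hsum : ∑ a ∈ s, ∑ b ∈ t, f a b < ∑ a ∈ s, g a := by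
    rw [sum_comm]
    exact (sum_le_card_nsmul t _ B hB).trans_lt hg
  obtain ⟨a, ha, hlt⟩ := exists_lt_of_sum_lt hsum
  exact ⟨a, ha, fun b hb => (single_le_sum (hf a ha) hb).trans_lt hlt⟩

lemma mul_lt_eight_sevenths_pow_div_two {k L : ℕ} (hk : 2 * k ≤ 2 ^ L) :
    (k * L : ℝ) < (8 / 7) ^ (12 * L) / 2 := by
  have hk' : 2 * (k : ℝ) ≤ 2 ^ L := by exact_mod_cast hk
  have hL : (L : ℝ) < 2 ^ L := by exact_mod_cast Nat.lt_two_pow_self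
  have hpow : (2 : ℝ) ^ L * 2 ^ L ≤ (8 / 7) ^ (12 * L) := by
    rw [← mul_pow, pow_mul]
    exact pow_le_pow_left₀ (by norm_num) (by norm_num) L
  have hlt : 2 * (k : ℝ) * L < 2 ^ L * 2 ^ L :=
    mul_lt_mul' hk' hL (Nat.cast_nonneg L) (by positivity)
  linarith

lemma exists_delays_card_arrivals_le {L : ℕ} (hι : 2 * Fintype.card ι ≤ 2 ^ L)
    (hκ : 2 * Fintype.card κ ≤ 2 ^ L) (d : ι → κ → ℕ∞) :
    ∃ δ : ι → ℕ, (∀ u, δ u < L) ∧ ∀ v, ∀ T < L, (∀ u, T ≤ δ u + d u v) →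
      #{u | δ u + d u v ≤ T + 2} ≤ 12 * L := by
  classical
  have hmass : #((univ : Finset κ) ×ˢ range L) • (2 ^ L : ℝ) ^ Fintype.card ι <
      ∑ δ ∈ Fintype.piFinset fun _ : ι => range L, (8 / 7) ^ (12 * L) * ∏ u, (2 : ℝ) ^ δ u := by
    calc _ = (Fintype.card κ * L : ℝ) * (2 ^ L) ^ Fintype.card ι := by simp
      _ < (8 / 7) ^ (12 * L) / 2 * (2 ^ L) ^ Fintype.card ι := by
          gcongr; exact mul_lt_eight_sevenths_pow_div_two hκ
      _ = (8 / 7) ^ (12 * L) * ((2 ^ L) ^ Fintype.card ι / 2) := by ring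
      _ ≤ _ := by rw [← mul_sum]; gcongr; exact half_two_pow_pow_card_le_sum_prod hι
  have hnonneg (δ : ι → ℕ) (vT : κ × ℕ) :
      0 ≤ ∏ u, (2 : ℝ) ^ δ u * windowWeight vT.2 2 (δ u + d u vT.1) :=
    prod_nonneg fun u _ => mul_nonneg (by positivity) (windowWeight_nonneg ..)
  obtain ⟨δ, hδ, hlt⟩ := exists_forall_lt_of_card_nsmul_lt_sum (fun δ _ vT _ => hnonneg δ vT)
    (fun vT _ => sum_prod_two_pow_mul_windowWeight_le (d · vT.1) vT.2 L 2) hmass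
  refine ⟨δ, fun u => mem_range.1 (Fintype.mem_piFinset.1 hδ u), fun v T hT hle => ?_⟩
  have hmoment := hlt (v, T) (by simpa using hT)
  have hbase : (2 : ℝ) ^ (2 + 1) / (2 ^ (2 + 1) - 1) = 8 / 7 := by norm_num
  rw [prod_mul_distrib, prod_windowWeight_of_forall_le hle, hbase, mul_comm,
    mul_lt_mul_iff_left₀ (by positivity), pow_lt_pow_iff_right₀ (by norm_num)] at hmoment
  simpa only [Nat.cast_ofNat] using hmoment.le

end Delays

section Clusters

variable {V : Type*} {G : SimpleGraph V}

lemma edist_add_edist_of_mem_support {u v w : V} {p : G.Walk u v} (hp : p.length = G.edist u v)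
    (hw : w ∈ p.support) : G.edist u w + G.edist w v = G.edist u v := by
  classical
  refine le_antisymm ?_ SimpleGraph.edist_triangle
  calc G.edist u w + G.edist w v ≤ (p.takeUntil w hw).length + (p.dropUntil w hw).length :=
        add_le_add (SimpleGraph.edist_le _) (SimpleGraph.edist_le _)
    _ = p.length := by
        rw [← Nat.cast_add, ← SimpleGraph.Walk.length_append, SimpleGraph.Walk.take_spec]
    _ = G.edist u v := hp

lemma edist_induce_le_of_forall_geodesic_mem {s : Set V} {x v : V} (hx : x ∈ s) (hv : v ∈ s)
    (h : ∀ w, G.edist x w + G.edist w v = G.edist x v → w ∈ s) :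
    (G.induce s).edist ⟨x, hx⟩ ⟨v, hv⟩ ≤ G.edist x v := by
  by_cases hxv : G.edist x v = ⊤
  · exact hxv ▸ le_top
  obtain ⟨p, hp⟩ := SimpleGraph.exists_walk_of_edist_ne_top hxv
  let q := p.induce s fun w hw => h w (edist_add_edist_of_mem_support hp hw)
  have hq : q.length = p.length := by
    rw [← q.length_map (SimpleGraph.Embedding.induce s).toHom, SimpleGraph.Walk.map_induce p]
    rfl
  rw [← hp, ← hq]
  exact SimpleGraph.edist_le q

variable (G) in
/-- The time at which the wave that starts at `u` after the delay `δ u` reaches `v`. -/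
noncomputable def arrivalTime (δ : V → ℕ) (u v : V) : ℕ∞ :=
  δ u + G.edist u v

lemma arrivalTime_self (δ : V → ℕ) (v : V) : arrivalTime G δ v v = δ v := by
  simp [arrivalTime]

lemma arrivalTime_le_add_edist (δ : V → ℕ) (u v w : V) :
    arrivalTime G δ u v ≤ arrivalTime G δ u w + G.edist w v := by
  rw [arrivalTime, arrivalTime, add_assoc]
  gcongr
  exact SimpleGraph.edist_triangle

lemma arrivalTime_le_add_one_of_adj (δ : V → ℕ) (u : V) {v w : V} (h : G.Adj w v) :
    arrivalTime G δ u v ≤ arrivalTime G δ u w + 1 :=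
  SimpleGraph.edist_eq_one_iff_adj.2 h ▸ arrivalTime_le_add_edist δ u v w

variable [Finite V] [LinearOrder V]

lemma exists_forall_toLex_arrivalTime_le (G : SimpleGraph V) (δ : V → ℕ) (v : V) :
    ∃ x, ∀ u, toLex (arrivalTime G δ x v, x) ≤ toLex (arrivalTime G δ u v, u) :=
  have : Nonempty V := ⟨v⟩
  Finite.exists_min fun u => toLex (arrivalTime G δ u v, u)

variable (G) in
/-- The start of the wave that reaches `v` first. Ties are broken by the order of `V`, so that the
choice is consistent along shortest paths. -/
noncomputable def center (δ : V → ℕ) (v : V) : V :=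
  (exists_forall_toLex_arrivalTime_le G δ v).choose

lemma toLex_arrivalTime_center_le (δ : V → ℕ) (v u : V) :
    toLex (arrivalTime G δ (center G δ v) v, center G δ v) ≤ toLex (arrivalTime G δ u v, u) :=
  (exists_forall_toLex_arrivalTime_le G δ v).choose_spec u

lemma arrivalTime_center_le (δ : V → ℕ) (v u : V) :
    arrivalTime G δ (center G δ v) v ≤ arrivalTime G δ u v :=
  (Prod.Lex.toLex_le_toLex'.1 (toLex_arrivalTime_center_le δ v u)).1

lemma arrivalTime_center_le_delay (δ : V → ℕ) (v : V) : arrivalTime G δ (center G δ v) v ≤ δ v :=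
  (arrivalTime_center_le δ v v).trans_eq (arrivalTime_self δ v)

lemma edist_center_le_delay (δ : V → ℕ) (v : V) : G.edist (center G δ v) v ≤ δ v :=
  le_add_self.trans (arrivalTime_center_le_delay δ v)

lemma center_eq_of_edist_add_edist_eq {δ : V → ℕ} {v w : V}
    (h : G.edist (center G δ v) w + G.edist w v = G.edist (center G δ v) v) :
    center G δ w = center G δ v := by
  set x := center G δ v with hx
  have hfin : G.edist w v ≠ ⊤ := ne_top_of_le_ne_top
    (ne_top_of_le_ne_top (ENat.natCast_ne_top _) (edist_center_le_delay δ v)) (h ▸ le_add_self)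
  have hadd : arrivalTime G δ x v = arrivalTime G δ x w + G.edist w v := by
    rw [arrivalTime, arrivalTime, ← h, add_assoc]
  suffices hmin : ∀ u, toLex (arrivalTime G δ x w, x) ≤ toLex (arrivalTime G δ u w, u) from
    congrArg (fun p => (ofLex p).2) (le_antisymm (toLex_arrivalTime_center_le δ w x) (hmin _))
  intro u
  have htri := arrivalTime_le_add_edist (G := G) δ u v w
  obtain ⟨hle, htie⟩ := Prod.Lex.toLex_le_toLex'.1 (toLex_arrivalTime_center_le (G := G) δ v u)
  simp only [← hx] at hle htie
  refine Prod.Lex.toLex_le_toLex'.2 ⟨?_, fun heq : arrivalTime G δ x w = arrivalTime G δ u w =>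
    htie (le_antisymm hle ?_)⟩
  · exact (ENat.add_le_add_iff_right hfin).1 (hadd ▸ hle.trans htri)
  · exact htri.trans_eq (by rw [hadd, heq])

lemma center_center (δ : V → ℕ) (v : V) : center G δ (center G δ v) = center G δ v :=
  center_eq_of_edist_add_edist_eq (by simp)

lemma edist_induce_center_preimage_le {δ : V → ℕ} {D : ℕ} (hδ : ∀ v, δ v ≤ D) (x : V)
    (u v : center G δ ⁻¹' {x}) : (G.induce (center G δ ⁻¹' {x})).edist u v ≤ (2 * D : ℕ) := by
  have hx : x ∈ center G δ ⁻¹' {x} := by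
    obtain ⟨u, rfl⟩ := u
    exact center_center δ u
  have hradius (w : center G δ ⁻¹' {x}) :
      (G.induce (center G δ ⁻¹' {x})).edist ⟨x, hx⟩ w ≤ D := by
    obtain ⟨w, rfl⟩ := w
    calc _ ≤ G.edist (center G δ w) w :=
          edist_induce_le_of_forall_geodesic_mem hx rfl fun _ => center_eq_of_edist_add_edist_eq
      _ ≤ δ w := edist_center_le_delay δ w
      _ ≤ D := Nat.cast_le.2 (hδ w)
  calc _ ≤ (G.induce _).edist u ⟨x, hx⟩ + (G.induce _).edist ⟨x, hx⟩ v :=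
        SimpleGraph.edist_triangle
    _ ≤ D + D := add_le_add (SimpleGraph.edist_comm.trans_le (hradius u)) (hradius v)
    _ = (2 * D : ℕ) := by rw [two_mul, Nat.cast_add]

lemma arrivalTime_center_le_add_two_of_adj (δ : V → ℕ) {u v : V} (h : G.Adj v u) :
    arrivalTime G δ (center G δ u) v ≤ arrivalTime G δ (center G δ v) v + 2 :=
  calc arrivalTime G δ (center G δ u) v
      ≤ arrivalTime G δ (center G δ u) u + 1 := arrivalTime_le_add_one_of_adj δ _ h.symm
    _ ≤ arrivalTime G δ (center G δ v) u + 1 := by gcongr; exact arrivalTime_center_le δ u _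
    _ ≤ arrivalTime G δ (center G δ v) v + 1 + 1 := by
        gcongr; exact arrivalTime_le_add_one_of_adj δ _ h
    _ = arrivalTime G δ (center G δ v) v + 2 := by rw [add_assoc, one_add_one_eq_two]

end Clusters

section LDC

variable {V α : Type*} {G : SimpleGraph V}

/-- A `(D, K)`-low diameter and communication decomposition, encoded by a labelling `c` whose
nonempty fibers are the clusters. The extended distance makes the bound on the strong diameter
include connectedness. -/
structure IsLDC (G : SimpleGraph V) (c : V → α) (D K : ℕ) : Prop where
  edist_le (x : α) (u v : c ⁻¹' {x}) : (G.induce (c ⁻¹' {x})).edist u v ≤ D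
  encard_le (v : V) : (c '' G.neighborSet v).encard ≤ K

theorem exists_isLDC [Fintype V] (G : SimpleGraph V) {L : ℕ} (hL : 2 * Fintype.card V ≤ 2 ^ L) :
    ∃ c : V → V, IsLDC G c (2 * L) (12 * L) := by
  let : LinearOrder V := LinearOrder.lift' (Fintype.equivFin V) (Fintype.equivFin V).injective
  obtain ⟨δ, hδ, hcard⟩ := exists_delays_card_arrivals_le hL hL G.edist
  refine ⟨center G δ, edist_induce_center_preimage_le fun v => (hδ v).le, fun v => ?_⟩
  obtain ⟨T, hT, hTδ⟩ := ENat.le_natCast_iff.1 (arrivalTime_center_le_delay (G := G) δ v)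
  have hsub : center G δ '' G.neighborSet v ⊆
      ({u | δ u + G.edist u v ≤ T + 2} : Finset V) := by
    rintro _ ⟨u, hu, rfl⟩
    simpa [← hT, arrivalTime] using arrivalTime_center_le_add_two_of_adj δ hu
  calc (center G δ '' G.neighborSet v).encard
      ≤ #{u | δ u + G.edist u v ≤ T + 2} :=
        (Set.encard_le_encard hsub).trans_eq (Set.encard_coe_eq_coe_finsetCard _)
    _ ≤ (12 * L : ℕ) := Nat.cast_le.2 <| hcard v T (hTδ.trans_lt (hδ v)) fun u =>
        hT ▸ arrivalTime_center_le δ v u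

namespace IsLDC

variable {c : V → α} {D K : ℕ}

lemma connected_induce_preimage (h : IsLDC G c D K) {x : α} (hx : x ∈ Set.range c) :
    (G.induce (c ⁻¹' {x})).Connected where
  preconnected u v := SimpleGraph.reachable_of_edist_ne_top
    (ne_top_of_le_ne_top (ENat.natCast_ne_top D) (h.edist_le x u v))
  nonempty := Set.Nonempty.to_subtype hx

lemma exists_partition [Finite V] (h : IsLDC G c D K) :
    ∃ (k : ℕ) (P : Fin k → Set V),
      (∀ i, (P i).Nonempty) ∧
      (∀ i j, i ≠ j → Disjoint (P i) (P j)) ∧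
      (⋃ i, P i) = Set.univ ∧
      (∀ i, (G.induce (P i)).Connected ∧ ∀ u v : P i, (G.induce (P i)).dist u v ≤ D) ∧
      (∀ v : V, {i | ∃ u ∈ P i, G.Adj v u}.ncard ≤ K) := by
  obtain ⟨k, ⟨e⟩⟩ := Finite.exists_equiv_fin (Set.range c)
  let label (i : Fin k) : α := e.symm i
  have label_injective : Function.Injective label := Subtype.val_injective.comp e.symm.injective
  refine ⟨k, fun i => c ⁻¹' {label i}, fun i => (e.symm i).2, fun i j hij => ?_, ?_, fun i => ?_,
    fun v => ?_⟩
  · exact Disjoint.preimage c (Set.disjoint_singleton.2 (label_injective.ne hij))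
  · exact Set.iUnion_eq_univ_iff.2 fun v => ⟨e ⟨c v, v, rfl⟩, by simp [label]⟩
  · exact ⟨h.connected_induce_preimage (e.symm i).2, fun u v =>
      ENat.toNat_le_of_le_natCast (h.edist_le _ u v)⟩
  · have hmaps : Set.MapsTo label {i | ∃ u ∈ c ⁻¹' {label i}, G.Adj v u} (c '' G.neighborSet v) :=
      fun i ⟨u, hu, hadj⟩ => ⟨u, hadj, hu⟩
    calc _ ≤ (c '' G.neighborSet v).ncard :=
          Set.ncard_le_ncard_of_injOn label hmaps label_injective.injOn
      _ ≤ K := ENat.toNat_le_of_le_natCast (h.encard_le v)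

end IsLDC

end LDC

lemma two_mul_le_two_pow_natLog_add_two (n : ℕ) : 2 * n ≤ 2 ^ (Nat.log 2 n + 2) := by
  have := Nat.lt_pow_succ_log_self one_lt_two n
  rw [pow_succ]
  lia

lemma natLog_add_two_le_six_mul_log {n : ℕ} (hn : 2 ≤ n) :
    ((Nat.log 2 n + 2 : ℕ) : ℝ) ≤ 6 * Real.log n := by
  have hlog2 : (1 / 2 : ℝ) < Real.log 2 := by linarith [Real.log_two_gt_d9]
  have hlog : Real.log 2 ≤ Real.log n := Real.log_le_log two_pos (by exact_mod_cast hn)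
  have hfloor : Nat.log 2 n * Real.log 2 ≤ Real.log n := by
    rw [← le_div_iff₀ (by linarith)]
    exact_mod_cast Real.natLog_le_logb n 2
  push_cast
  nlinarith

/-- **LDC decomposition existence.** There is a universal constant `C > 0` such that every
finite simple graph `G` on `n ≥ 2` vertices admits a partition of its vertex set into nonempty
clusters, each of strong diameter at most `C · log n` (the induced subgraph is connected and
has hop-distance at most `C · log n` between any two of its vertices), and such that the
neighbors of any vertex meet at most `C · log n` distinct clusters. -/
theorem ldc_decomposition_exists :
    ∃ C : ℝ, 0 < C ∧
      ∀ (V : Type) [Fintype V] (G : SimpleGraph V),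
        2 ≤ Fintype.card V →
        ∃ (k : ℕ) (P : Fin k → Set V),
          (∀ i, (P i).Nonempty) ∧
          (∀ i j, i ≠ j → Disjoint (P i) (P j)) ∧
          (⋃ i, P i) = Set.univ ∧
          (∀ i, (G.induce (P i)).Connected ∧
            ∀ u v : P i,
              (((G.induce (P i)).dist u v : ℝ)) ≤ C * Real.log (Fintype.card V)) ∧
          (∀ v : V,
            (({i | ∃ u ∈ P i, G.Adj v u}.ncard : ℝ)) ≤ C * Real.log (Fintype.card V)) := by
  refine ⟨72, by norm_num, fun V _ G hn => ?_⟩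
  set L := Nat.log 2 (Fintype.card V) + 2
  have hL : (L : ℝ) ≤ 6 * Real.log (Fintype.card V) := natLog_add_two_le_six_mul_log hn
  have bound {m : ℕ} (hm : m ≤ 12 * L) : (m : ℝ) ≤ 72 * Real.log (Fintype.card V) := by
    have : (m : ℝ) ≤ 12 * L := by exact_mod_cast hm
    linarith
  obtain ⟨c, hc⟩ := exists_isLDC G (two_mul_le_two_pow_natLog_add_two (Fintype.card V))
  obtain ⟨k, P, hne, hdisj, hunion, hdiam, hnbr⟩ := hc.exists_partition
  refine ⟨k, P, hne, hdisj, hunion, fun i => ⟨(hdiam i).1, fun u v => ?_⟩, fun v => ?_⟩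
  · exact bound (((hdiam i).2 u v).trans (by lia))
  · exact bound (hnbr v)
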